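/- If z² ≤ 1, then BF(z,k) = sqrt(1+k)·exp(-z²k/(2(1+k))) > 1 for all k > 0; i.e. the Bayes factor always favours the null and no flip point exists. -/

import Mathlib

noncomputable def BF (z k : ℝ) : ℝ := Real.sqrt (1 + k) * Real.exp (-(z^2 * k) / (2 * (1 + k)))

theorem bf_gt_one_of_small_z (z : ℝ) (hz : z^2 ≤ 1) :
    ∀ k : ℝ, 0 < k → 1 < BF z k := by
  intro k hk
  have h1 : (0:ℝ) < 1 + k := by linarith
  have hlog : k / (1 + k) < Real.log (1 + k) := by
    have h := Real.log_lt_sub_one_of_pos (inv_pos.mpr h1) (by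
      intro h
      rw [inv_eq_one] at h
      linarith)
    rw [Real.log_inv] at h
    have e : k / (1 + k) = 1 - (1 + k)⁻¹ := by field_simp; ring
    linarith
  have hz' : z^2 * k / (1 + k) ≤ k / (1 + k) := by
    gcongr
    nlinarith
  have e2 : -(z^2 * k) / (2 * (1 + k)) = -(z^2 * k / (1 + k)) / 2 := by
    field_simp
  have hs : Real.sqrt (1 + k) = Real.exp (Real.log (1 + k) / 2) := by
    rw [← Real.log_sqrt h1.le, Real.exp_log (Real.sqrt_pos.mpr h1)]
  unfold BF
  rw [hs, ← Real.exp_add, Real.one_lt_exp_iff, e2]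
  linarith
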